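/- There exists a deterministic online bin-packing algorithm A such that for every finite input sequence I of small L-shapes (those with ℓx ≤ 1/2 and ℓy ≤ 1/2), the number of bins used by A on I is at most 8·OPT(I) + 7. -/

import Mathlib

/-- An L-shape, given by its four parameters: arm lengths `lx, ly` and widths `wx, wy`. -/
structure LShape where
  lx : ℝ
  wx : ℝ
  ly : ℝ
  wy : ℝ

/-- The parameter constraints of an L-shape: `0 ≤ wx ≤ lx ≤ 1` and `0 ≤ wy ≤ ly ≤ 1`. -/
def LShape.IsValid (L : LShape) : Prop :=
  0 ≤ L.wx ∧ L.wx ≤ L.lx ∧ L.lx ≤ 1 ∧ 0 ≤ L.wy ∧ L.wy ≤ L.ly ∧ L.ly ≤ 1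

/-- The point set `([0,lx]×[0,wy]) ∪ ([0,wx]×[0,ly])` of an L-shape (reference point at the
origin). -/
def LShape.toSet (L : LShape) : Set (ℝ × ℝ) :=
  Set.Icc ((0, 0) : ℝ × ℝ) (L.lx, L.wy) ∪ Set.Icc ((0, 0) : ℝ × ℝ) (L.wx, L.ly)

/-- Translate a set in the plane by a vector. -/
def planeTranslate (v : ℝ × ℝ) (S : Set (ℝ × ℝ)) : Set (ℝ × ℝ) := (· + v) '' S

/-- The unit bin `[0,1]²`. -/
def unitBin : Set (ℝ × ℝ) := Set.Icc ((0, 0) : ℝ × ℝ) (1, 1)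

/-- The online decision (bin index, translation vector) made by algorithm `A` for the `i`-th
item of the list `l`: it depends only on the first `i+1` items. -/
def placeOf (A : List LShape → ℕ × ℝ × ℝ) (l : List LShape) (i : Fin l.length) : ℕ × ℝ × ℝ :=
  A (l.take (i.1 + 1))

/-- The placements produced by `A` on input `l` form valid bin packings: each translate lies
in the unit bin, and items in the same bin have pairwise disjoint interiors. -/
def OnlinePacks (A : List LShape → ℕ × ℝ × ℝ) (l : List LShape) : Prop :=
  (∀ i : Fin l.length, planeTranslate (placeOf A l i).2 (l.get i).toSet ⊆ unitBin) ∧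
  ∀ i j : Fin l.length, i ≠ j → (placeOf A l i).1 = (placeOf A l j).1 →
    Disjoint (interior (planeTranslate (placeOf A l i).2 (l.get i).toSet))
             (interior (planeTranslate (placeOf A l j).2 (l.get j).toSet))

/-- The number of distinct bins used by `A` on input `l`. -/
def binsUsed (A : List LShape → ℕ × ℝ × ℝ) (l : List LShape) : ℕ :=
  ((Finset.univ : Finset (Fin l.length)).image fun i => (placeOf A l i).1).card

/-- The items of `l` can be packed offline into `m` unit bins. -/
def OffPacks (l : List LShape) (m : ℕ) : Prop :=
  ∃ (bin : Fin l.length → ℕ) (v : Fin l.length → ℝ × ℝ),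
    (∀ i, bin i < m) ∧
    (∀ i, planeTranslate (v i) (l.get i).toSet ⊆ unitBin) ∧
    ∀ i j, i ≠ j → bin i = bin j →
      Disjoint (interior (planeTranslate (v i) (l.get i).toSet))
               (interior (planeTranslate (v j) (l.get j).toSet))

/-- The offline optimum: the minimum number of unit bins into which `l` can be packed. -/
noncomputable def OPT (l : List LShape) : ℕ := sInf {m | OffPacks l m}

/-!
An item with `2⁻ⁱ / 4 < lx ≤ 2⁻ⁱ / 2` and `2⁻ʲ / 4 < ly ≤ 2⁻ʲ / 2` belongs to the class `(i, j)` and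
goes to a box with sides `2⁻ⁱ × 2⁻ʲ`. Inside a box the items are nested along a staircase: each
reference point is the previous one moved by the widths `(wx, wy)` of the previous item. The arms
are at most half the sides of the box, so the next item fits until the total move exceeds half a
side. By then, the arms being longer than a quarter of the sides, the items have total area at least
an eighth of the area of the box.

New boxes are obtained by halving boxes of the next larger class, a whole bin being a box of class
`(0, 0)`. As the other half is kept for later, there is never more than one spare box and one
partially filled box of each class. For either kind the areas sum to less than
`∑ 2⁻ⁱ * ∑ 2⁻ʲ = 4`, hence the number of bins is less than `8` times the area of the items plus `8`,
and the area of the items is at most `OPT`.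
-/

/-! ### Greedy online algorithms -/

section Online

variable {ι π : Type*}

/-- The decisions made by an online algorithm `A` on the input `l`, in order of arrival, each paired
with the item it was made for. -/
def onlineTrace (A : List ι → π) (l : List ι) : List (π × ι) :=
  List.ofFn fun i : Fin l.length => (A (l.take (i + 1)), l.get i)

lemma length_onlineTrace (A : List ι → π) (l : List ι) : (onlineTrace A l).length = l.length :=
  List.length_ofFn

lemma getElem_onlineTrace (A : List ι → π) (l : List ι) (i : ℕ)
    (hi : i < (onlineTrace A l).length) :
    (onlineTrace A l)[i] = (A (l.take (i + 1)), l[i]'(length_onlineTrace A l ▸ hi)) :=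
  List.getElem_ofFn _

lemma onlineTrace_concat (A : List ι → π) (l : List ι) (x : ι) :
    onlineTrace A (l ++ [x]) = onlineTrace A l ++ [(A (l ++ [x]), x)] := by
  refine List.ext_getElem (by simp [length_onlineTrace]) fun i hi _ => ?_
  have hle : i ≤ l.length := Nat.le_of_lt_succ (by simpa [length_onlineTrace] using hi)
  rcases hle.lt_or_eq with h | rfl
  · simp [getElem_onlineTrace, length_onlineTrace, h, List.take_append_of_le_length h]
  · simp [getElem_onlineTrace, length_onlineTrace, List.take_of_length_le]

lemma map_snd_onlineTrace (A : List ι → π) (l : List ι) : (onlineTrace A l).map Prod.snd = l := by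
  simp only [onlineTrace, List.map_ofFn]
  exact List.ofFn_get l

lemma exists_onlineTrace_of_step [Inhabited π] {Good : List (π × ι) → Prop} {Admissible : ι → Prop}
    (nil : Good []) (step : ∀ P x, Good P → Admissible x → ∃ p, Good (P ++ [(p, x)])) :
    ∃ A : List ι → π, ∀ l, (∀ x ∈ l, Admissible x) → Good (onlineTrace A l) := by
  have total_step : ∀ P x, ∃ p, Good P → Admissible x → Good (P ++ [(p, x)]) := fun P x => by
    by_cases h : Good P ∧ Admissible x
    · exact (step P x h.1 h.2).imp fun _ hp _ _ => hp
    · exact ⟨default, fun hP hx => absurd ⟨hP, hx⟩ h⟩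
  choose next good_next using total_step
  let run (l : List ι) : List (π × ι) := l.foldl (fun P x => P ++ [(next P x, x)]) []
  let A (l : List ι) : π := ((run l).getLast?.map Prod.fst).getD default
  have run_concat (l : List ι) (x : ι) : run (l ++ [x]) = run l ++ [(next (run l) x, x)] := by
    simp [run]
  have trace_eq_run (l : List ι) : onlineTrace A l = run l := by
    induction l using List.reverseRecOn with
    | nil => simp [onlineTrace, run]
    | append_singleton l x ih => simp [onlineTrace_concat, ih, run_concat, A]
  refine ⟨A, fun l hl => ?_⟩
  rw [trace_eq_run]
  induction l using List.reverseRecOn with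
  | nil => exact nil
  | append_singleton l x ih =>
    rw [run_concat]
    exact good_next _ x (ih fun y hy => hl y (by simp [hy])) (hl x (by simp))

end Online

/-! ### Open boxes and L-shapes -/

/-- The open rectangle with lower left corner `lo` and upper right corner `hi`. This is not the
interval `Set.Ioo lo hi` of the product order, which contains some of the boundary. -/
def openBox (lo hi : ℝ × ℝ) : Set (ℝ × ℝ) := Set.Ioo lo.1 hi.1 ×ˢ Set.Ioo lo.2 hi.2

lemma interior_Icc_eq_openBox (lo hi : ℝ × ℝ) : interior (Set.Icc lo hi) = openBox lo hi := by
  rw [Set.Icc_prod_eq, interior_prod_eq, interior_Icc, interior_Icc, openBox]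

lemma openBox_subset_openBox {lo hi lo' hi' : ℝ × ℝ} (hlo : lo ≤ lo') (hhi : hi' ≤ hi) :
    openBox lo' hi' ⊆ openBox lo hi :=
  Set.prod_mono (Set.Ioo_subset_Ioo hlo.1 hhi.1) (Set.Ioo_subset_Ioo hlo.2 hhi.2)

lemma volume_openBox_add (v : ℝ × ℝ) {a : ℝ} (ha : 0 ≤ a) (b : ℝ) :
    MeasureTheory.volume (openBox v (v + (a, b))) = ENNReal.ofReal (a * b) := by
  rw [openBox, MeasureTheory.Measure.volume_eq_prod, MeasureTheory.Measure.prod_prod]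
  simp [ENNReal.ofReal_mul ha]

lemma volume_unitBin : MeasureTheory.volume unitBin = 1 := by
  rw [unitBin, Set.Icc_prod_eq, MeasureTheory.Measure.volume_eq_prod,
    MeasureTheory.Measure.prod_prod]
  simp

namespace LShape

/-- The larger of the areas of the two arms. It serves as a lower bound for the area of an
L-shape. -/
noncomputable def armArea (L : LShape) : ℝ := max (L.wx * L.ly) (L.lx * L.wy)

lemma planeTranslate_toSet (L : LShape) (v : ℝ × ℝ) :
    planeTranslate v L.toSet = Set.Icc v (v + (L.lx, L.wy)) ∪ Set.Icc v (v + (L.wx, L.ly)) := by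
  rw [planeTranslate, toSet, Set.image_union, Set.image_add_const_Icc, Set.image_add_const_Icc,
    Prod.mk_zero_zero, zero_add, add_comm v, add_comm v]

lemma disjoint_interior_openBox (L : LShape) (v hi : ℝ × ℝ) :
    Disjoint (interior (planeTranslate v L.toSet)) (openBox (v + (L.wx, L.wy)) hi) := by
  rw [Set.disjoint_left]
  rintro p hp ⟨⟨hx, -⟩, hy, -⟩
  rw [planeTranslate_toSet] at hp
  rcases interior_subset hp with ⟨-, hp⟩ | ⟨-, hp⟩
  · exact absurd hp.2 hy.not_ge
  · exact absurd hp.1 hx.not_ge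

namespace IsValid

variable {L : LShape}

lemma armArea_nonneg (hL : L.IsValid) : 0 ≤ L.armArea :=
  le_max_of_le_left (mul_nonneg hL.1 (hL.2.2.2.1.trans hL.2.2.2.2.1))

lemma planeTranslate_subset_Icc (hL : L.IsValid) (v : ℝ × ℝ) :
    planeTranslate v L.toSet ⊆ Set.Icc v (v + (L.lx, L.ly)) := by
  obtain ⟨-, hwx, -, -, hwy, -⟩ := hL
  rw [planeTranslate_toSet]
  refine Set.union_subset (Set.Icc_subset_Icc_right ?_) (Set.Icc_subset_Icc_right ?_) <;>
    gcongr

lemma interior_planeTranslate_subset (hL : L.IsValid) (v : ℝ × ℝ) :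
    interior (planeTranslate v L.toSet) ⊆ openBox v (v + (L.lx, L.ly)) :=
  (interior_mono (hL.planeTranslate_subset_Icc v)).trans_eq (interior_Icc_eq_openBox _ _)

lemma planeTranslate_zero_subset_unitBin (hL : L.IsValid) :
    planeTranslate 0 L.toSet ⊆ unitBin := by
  refine (hL.planeTranslate_subset_Icc 0).trans (Set.Icc_subset_Icc_right ?_)
  rw [zero_add]
  exact ⟨hL.2.2.1, hL.2.2.2.2.2⟩

lemma armArea_le_volume (hL : L.IsValid) (v : ℝ × ℝ) :
    ENNReal.ofReal L.armArea ≤ MeasureTheory.volume (interior (planeTranslate v L.toSet)) := by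
  obtain ⟨hwx, hwx_le, -⟩ := hL
  rw [armArea, ENNReal.ofReal_max, ← volume_openBox_add v hwx, ← interior_Icc_eq_openBox,
    ← volume_openBox_add v (hwx.trans hwx_le), ← interior_Icc_eq_openBox, planeTranslate_toSet]
  exact max_le (MeasureTheory.measure_mono (interior_mono Set.subset_union_right))
    (MeasureTheory.measure_mono (interior_mono Set.subset_union_left))

end IsValid

end LShape

/-! ### The area lower bound on the offline optimum -/

lemma sum_volume_le_one {κ : Type*} (s : Finset κ) {U : κ → Set (ℝ × ℝ)}
    (hopen : ∀ i ∈ s, IsOpen (U i)) (hsub : ∀ i ∈ s, U i ⊆ unitBin)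
    (hdisj : (s : Set κ).PairwiseDisjoint U) : ∑ i ∈ s, MeasureTheory.volume (U i) ≤ 1 := by
  rw [← MeasureTheory.measure_biUnion_finset hdisj fun i hi => (hopen i hi).measurableSet,
    ← volume_unitBin]
  exact MeasureTheory.measure_mono (Set.iUnion₂_subset hsub)

lemma sum_armArea_le_of_offPacks {l : List LShape} {m : ℕ} (hl : ∀ L ∈ l, L.IsValid)
    (h : OffPacks l m) : (l.map LShape.armArea).sum ≤ m := by
  obtain ⟨bin, v, hbin, hsub, hdisj⟩ := h
  let U (i : Fin l.length) : Set (ℝ × ℝ) := interior (planeTranslate (v i) (l.get i).toSet)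
  have hvalid (i : Fin l.length) : (l.get i).IsValid := hl _ (l.get_mem i)
  have hbound : ENNReal.ofReal (∑ i, (l.get i).armArea) ≤ ENNReal.ofReal m := calc
    ENNReal.ofReal (∑ i, (l.get i).armArea) = ∑ i, ENNReal.ofReal (l.get i).armArea :=
      ENNReal.ofReal_sum_of_nonneg fun i _ => (hvalid i).armArea_nonneg
    _ ≤ ∑ i, MeasureTheory.volume (U i) :=
      Finset.sum_le_sum fun i _ => (hvalid i).armArea_le_volume (v i)
    _ = ∑ b ∈ Finset.range m, ∑ i with bin i = b, MeasureTheory.volume (U i) :=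
      (Finset.sum_fiberwise_of_maps_to (fun i _ => Finset.mem_range.2 (hbin i)) _).symm
    _ ≤ ∑ b ∈ Finset.range m, 1 := by
      refine Finset.sum_le_sum fun b _ => sum_volume_le_one _ (fun _ _ => isOpen_interior)
        (fun i _ => interior_subset.trans (hsub i)) fun i hi j hj hij => hdisj i j hij ?_
      simp only [Finset.coe_filter, Finset.mem_univ, true_and, Set.mem_ofPred_eq] at hi hj
      exact hi.trans hj.symm
    _ = ENNReal.ofReal m := by simp
  have hsum : (l.map LShape.armArea).sum = ∑ i, (l.get i).armArea := by
    simp [← Fin.sum_univ_fun_getElem]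
  rw [hsum]
  exact (ENNReal.ofReal_le_ofReal_iff m.cast_nonneg).1 hbound

lemma offPacks_length {l : List LShape} (hl : ∀ L ∈ l, L.IsValid) : OffPacks l l.length :=
  ⟨fun i => i, fun _ => 0, fun i => i.2,
    fun i => (hl _ (l.get_mem i)).planeTranslate_zero_subset_unitBin,
    fun _ _ hij h => absurd (Fin.ext h) hij⟩

lemma sum_armArea_le_OPT {l : List LShape} (hl : ∀ L ∈ l, L.IsValid) :
    (l.map LShape.armArea).sum ≤ OPT l :=
  sum_armArea_le_of_offPacks hl (Nat.sInf_mem (s := {m | OffPacks l m}) ⟨_, offPacks_length hl⟩)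

/-! ### Dyadic tiles -/

/-- A point of the disjoint union of all bins: the index of a bin and a point of the plane. Also
the type of placements, which locate the reference point of an item. -/
abbrev BinPoint := ℕ × ℝ × ℝ

/-- The side lengths `(2⁻ⁱ, 2⁻ʲ)` of a box of class `(i, j)`. -/
noncomputable def classSize (c : ℕ × ℕ) : ℝ × ℝ := ((1 / 2) ^ c.1, (1 / 2) ^ c.2)

/-- The area of a box of class `c`. -/
noncomputable def classArea (c : ℕ × ℕ) : ℝ := (classSize c).1 * (classSize c).2

/-- `HalfOf c d` says that a box of class `d` is cut into two halves of class `c`. -/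
inductive HalfOf : ℕ × ℕ → ℕ × ℕ → Prop
  | halfWidth (i j : ℕ) : HalfOf (i + 1, j) (i, j)
  | halfHeight (i j : ℕ) : HalfOf (i, j + 1) (i, j)

/-- The open rectangle between the corners `lo` and `hi` of a bin, reserved for items of class
`cls`. It is the part still available of a box of class `cls` in that bin; as the box fills up, `lo`
moves away from its lower left corner, and the rectangle is empty once `lo` has passed `hi`. -/
structure Tile where
  cls : ℕ × ℕ
  bin : ℕ
  lo : ℝ × ℝ
  hi : ℝ × ℝ

lemma classSize_fst_pos (c : ℕ × ℕ) : 0 < (classSize c).1 := by simp [classSize]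

lemma classSize_snd_pos (c : ℕ × ℕ) : 0 < (classSize c).2 := by simp [classSize]

lemma classSize_nonneg (c : ℕ × ℕ) : 0 ≤ classSize c :=
  ⟨(classSize_fst_pos c).le, (classSize_snd_pos c).le⟩

lemma classArea_nonneg (c : ℕ × ℕ) : 0 ≤ classArea c :=
  mul_nonneg (classSize_nonneg c).1 (classSize_nonneg c).2

lemma sum_one_half_pow_lt_two (s : Finset ℕ) : ∑ i ∈ s, (1 / 2 : ℝ) ^ i < 2 := by
  obtain ⟨k, hk⟩ := Infinite.exists_notMem_finset s
  have hle : ∑ i ∈ insert k s, (1 / 2 : ℝ) ^ i ≤ 2 :=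
    sum_le_hasSum _ (fun _ _ => by positivity) hasSum_geometric_two
  rw [Finset.sum_insert hk] at hle
  linarith [show (0 : ℝ) < (1 / 2) ^ k by positivity]

lemma sum_classArea_lt_four (s : Finset (ℕ × ℕ)) : ∑ c ∈ s, classArea c < 4 := calc
  ∑ c ∈ s, classArea c ≤ ∑ c ∈ s.image Prod.fst ×ˢ s.image Prod.snd, classArea c :=
    Finset.sum_le_sum_of_subset_of_nonneg Finset.subset_product fun c _ _ => classArea_nonneg c
  _ = (∑ i ∈ s.image Prod.fst, (1 / 2) ^ i) * ∑ j ∈ s.image Prod.snd, (1 / 2) ^ j := by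
    rw [Finset.sum_mul_sum, Finset.sum_product]; rfl
  _ < 2 * 2 := mul_lt_mul'' (sum_one_half_pow_lt_two _) (sum_one_half_pow_lt_two _)
    (by positivity) (by positivity)
  _ = 4 := by norm_num

lemma exists_one_half_pow_near {a : ℝ} (h0 : 0 < a) (h1 : a ≤ 1 / 2) :
    ∃ i : ℕ, a ≤ (1 / 2) ^ i / 2 ∧ (1 / 2) ^ i ≤ 4 * a := by
  obtain ⟨i, hlt, hle⟩ := exists_nat_pow_near_of_lt_one (x := 2 * a) (y := 1 / 2) (by linarith)
    (by linarith) (by norm_num) (by norm_num)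
  rw [pow_succ] at hlt
  exact ⟨i, by linarith, by linarith⟩

lemma exists_halfOf {c : ℕ × ℕ} (hc : c ≠ (0, 0)) : ∃ d, HalfOf c d := by
  obtain ⟨_ | i, _ | j⟩ := c
  · exact absurd rfl hc
  · exact ⟨_, .halfHeight 0 j⟩
  · exact ⟨_, .halfWidth i 0⟩
  · exact ⟨_, .halfWidth i (j + 1)⟩

namespace HalfOf

variable {c d : ℕ × ℕ}

lemma level_lt (h : HalfOf c d) : d.1 + d.2 < c.1 + c.2 := by
  cases h <;> simp only <;> omega

lemma classSize_le (h : HalfOf c d) : classSize c ≤ classSize d := by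
  cases h <;> constructor <;> simp only [classSize, pow_succ, le_refl] <;>
    exact mul_le_of_le_one_right (by positivity) (by norm_num)

lemma classArea_eq (h : HalfOf c d) : classArea d = 2 * classArea c := by
  cases h <;> simp only [classArea, classSize, pow_succ] <;> ring

lemma disjoint_openBox (h : HalfOf c d) (v : ℝ × ℝ) :
    Disjoint (openBox v (v + classSize c))
      (openBox (v + (classSize d - classSize c)) (v + classSize d)) := by
  rw [Set.disjoint_left]
  rintro p ⟨hpx, hpy⟩ ⟨hqx, hqy⟩
  simp only [Set.mem_Ioo, Prod.fst_add, Prod.snd_add, Prod.fst_sub, Prod.snd_sub] at hpx hpy hqx hqy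
  cases h <;> simp only [classSize, pow_succ] at hpx hpy hqx hqy <;> linarith

end HalfOf

namespace Tile

/-- The points of a tile, in the disjoint union of all bins. -/
def region (t : Tile) : Set BinPoint := {t.bin} ×ˢ openBox t.lo t.hi

/-- The tile `t` lies in one of the bins `0, …, n - 1` and is no larger than its class says. -/
structure Fits (n : ℕ) (t : Tile) : Prop where
  bin_lt : t.bin < n
  lo_nonneg : 0 ≤ t.lo
  hi_le_one : t.hi ≤ 1
  hi_le : t.hi ≤ t.lo + classSize t.cls

/-- The unused box of class `c` in bin `b` with lower left corner `v`. -/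
noncomputable def full (c : ℕ × ℕ) (b : ℕ) (v : ℝ × ℝ) : Tile := ⟨c, b, v, v + classSize c⟩

/-- What is left of the tile `t` after the L-shape `L` is placed at its lower left corner. -/
def advance (t : Tile) (L : LShape) : Tile := { t with lo := t.lo + (L.wx, L.wy) }

/-- The share of the area of a box that its items do not pay for at the rate of eight times their
arm area. If the lower left corner of a box with sides `w × h` has moved by `(s, t)`, the credit is
`w * h - 2 * max (s * h) (t * w)`. -/
noncomputable def credit (t : Tile) : ℝ :=
  2 * min ((t.hi.1 - t.lo.1) * (classSize t.cls).2) ((t.hi.2 - t.lo.2) * (classSize t.cls).1) -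
    classArea t.cls

lemma credit_full (c : ℕ × ℕ) (b : ℕ) (v : ℝ × ℝ) : (full c b v).credit = classArea c := by
  simp only [credit, full, Prod.fst_add, Prod.snd_add, add_sub_cancel_left, classArea,
    mul_comm (classSize c).2, min_self]
  ring

lemma Fits.credit_le {n : ℕ} {t : Tile} (ht : t.Fits n) : t.credit ≤ classArea t.cls := by
  have hwidth : (t.hi.1 - t.lo.1) * (classSize t.cls).2 ≤ classArea t.cls :=
    mul_le_mul_of_nonneg_right (sub_le_iff_le_add'.2 ht.hi_le.1) (classSize_nonneg _).2
  have hmin := (min_le_left _ ((t.hi.2 - t.lo.2) * (classSize t.cls).1)).trans hwidth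
  rw [credit]
  linarith

lemma half_classSize_le_of_credit_nonneg {t : Tile} (ht : 0 ≤ t.credit) :
    (classSize t.cls).1 / 2 ≤ t.hi.1 - t.lo.1 ∧ (classSize t.cls).2 / 2 ≤ t.hi.2 - t.lo.2 := by
  have hmin : classArea t.cls / 2 ≤ min ((t.hi.1 - t.lo.1) * (classSize t.cls).2)
      ((t.hi.2 - t.lo.2) * (classSize t.cls).1) := by
    rw [credit] at ht
    linarith
  obtain ⟨hx, hy⟩ := le_min_iff.1 hmin
  rw [classArea] at hx hy
  exact ⟨le_of_mul_le_mul_right (by linarith) (classSize_snd_pos t.cls),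
    le_of_mul_le_mul_right (by linarith) (classSize_fst_pos t.cls)⟩

lemma credit_le_credit_advance {t : Tile} {L : LShape} (hL : L.IsValid)
    (hx : (classSize t.cls).1 ≤ 4 * L.lx) (hy : (classSize t.cls).2 ≤ 4 * L.ly) :
    t.credit ≤ (t.advance L).credit + 8 * L.armArea := by
  have hwidth : L.wx * (classSize t.cls).2 ≤ 4 * L.armArea := by
    have := mul_le_mul_of_nonneg_left hy hL.1
    have : L.wx * L.ly ≤ L.armArea := le_max_left _ _
    linarith
  have hheight : L.wy * (classSize t.cls).1 ≤ 4 * L.armArea := by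
    have := mul_le_mul_of_nonneg_left hx hL.2.2.2.1
    have : L.lx * L.wy ≤ L.armArea := le_max_right _ _
    linarith
  have hmin : min ((t.hi.1 - t.lo.1) * (classSize t.cls).2)
      ((t.hi.2 - t.lo.2) * (classSize t.cls).1) - 4 * L.armArea ≤
      min ((t.hi.1 - (t.lo.1 + L.wx)) * (classSize t.cls).2)
        ((t.hi.2 - (t.lo.2 + L.wy)) * (classSize t.cls).1) := by
    refine le_min ?_ ?_
    · linarith [min_le_left ((t.hi.1 - t.lo.1) * (classSize t.cls).2)
        ((t.hi.2 - t.lo.2) * (classSize t.cls).1)]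
    · linarith [min_le_right ((t.hi.1 - t.lo.1) * (classSize t.cls).2)
        ((t.hi.2 - t.lo.2) * (classSize t.cls).1)]
  simp only [credit, advance, Prod.fst_add, Prod.snd_add]
  linarith

lemma Fits.mono {n m : ℕ} {t : Tile} (ht : t.Fits n) (hnm : n ≤ m) : t.Fits m :=
  ⟨ht.bin_lt.trans_le hnm, ht.lo_nonneg, ht.hi_le_one, ht.hi_le⟩

lemma Fits.advance {n : ℕ} {t : Tile} (ht : t.Fits n) {L : LShape} (hL : L.IsValid) :
    (t.advance L).Fits n := by
  have hlo : t.lo ≤ (t.advance L).lo := le_add_of_nonneg_right ⟨hL.1, hL.2.2.2.1⟩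
  exact ⟨ht.bin_lt, ht.lo_nonneg.trans hlo, ht.hi_le_one, ht.hi_le.trans (by gcongr; rfl)⟩

lemma region_subset_region {t t' : Tile} (hbin : t'.bin = t.bin) (hlo : t.lo ≤ t'.lo)
    (hhi : t'.hi ≤ t.hi) : t'.region ⊆ t.region :=
  Set.prod_mono (Set.singleton_subset_singleton.2 hbin) (openBox_subset_openBox hlo hhi)

lemma sum_credit_lt_four {n : ℕ} {R : List Tile} (hR : ∀ t ∈ R, t.Fits n)
    (hcls : (R.map cls).Nodup) : (R.map credit).sum < 4 := calc
  (R.map credit).sum ≤ (R.map (classArea ∘ cls)).sum :=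
    List.sum_le_sum fun t ht => (hR t ht).credit_le
  _ = ∑ c ∈ (R.map cls).toFinset, classArea c := by rw [List.sum_toFinset _ hcls, List.map_map]
  _ < 4 := sum_classArea_lt_four _

end Tile

/-! ### Layouts -/

/-- An item together with the bin and the translation vector it was assigned. -/
abbrev PlacedItem := BinPoint × LShape

/-- The interior of a placed item, in the disjoint union of all bins. -/
def occupied (q : PlacedItem) : Set BinPoint :=
  {q.1.1} ×ˢ interior (planeTranslate q.1.2 q.2.toSet)

lemma occupied_subset {q : PlacedItem} (hq : q.2.IsValid) :
    occupied q ⊆ {q.1.1} ×ˢ openBox q.1.2 (q.1.2 + (q.2.lx, q.2.ly)) :=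
  Set.prod_mono_right (hq.interior_planeTranslate_subset _)

lemma occupied_eq_empty {q : PlacedItem} (hq : q.2.IsValid) (h : q.2.lx = 0 ∨ q.2.ly = 0) :
    occupied q = ∅ := by
  refine Set.subset_empty_iff.1 ((occupied_subset hq).trans ?_)
  rcases h with h | h <;> simp [openBox, h]

/-- The items `P` are packed in the bins `0, …, n - 1`, the tiles `R` of these bins are still
available, and every unit of opened area is paid for: by the credit of a tile or by the items, at
the rate of eight times their arm area. -/
structure IsLayout (n : ℕ) (P : List PlacedItem) (R : List Tile) : Prop where
  opened_pos : 0 < n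
  fits : ∀ t ∈ R, t.Fits n
  bin_lt : ∀ q ∈ P, q.1.1 < n
  subset_unitBin : ∀ q ∈ P, planeTranslate q.1.2 q.2.toSet ⊆ unitBin
  disjoint : (R.map Tile.region ++ P.map occupied).Pairwise Disjoint
  opened_le : (n : ℝ) ≤ (R.map Tile.credit).sum + 8 * (P.map fun q => q.2.armArea).sum

lemma pairwise_disjoint_replace {α : Type*} {s : Set α} {l m : List (Set α)}
    (hsl : (s :: l).Pairwise Disjoint) (hm : m.Pairwise Disjoint) (hms : ∀ u ∈ m, u ⊆ s) :
    (m ++ l).Pairwise Disjoint := by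
  rw [List.pairwise_cons] at hsl
  exact List.pairwise_append.2 ⟨hm, hsl.2, fun u hu v hv => (hsl.1 v hv).mono_left (hms u hu)⟩

namespace IsLayout

variable {n : ℕ} {P : List PlacedItem} {R R' : List Tile} {t : Tile}

lemma perm (h : IsLayout n P R) (hR : R.Perm R') : IsLayout n P R' where
  opened_pos := h.opened_pos
  fits t ht := h.fits t (hR.mem_iff.2 ht)
  bin_lt := h.bin_lt
  subset_unitBin := h.subset_unitBin
  disjoint := ((hR.map _).append_right _).pairwise h.disjoint (fun hd => hd.symm)
  opened_le := (hR.map Tile.credit).sum_eq ▸ h.opened_le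

lemma discard (h : IsLayout n P (t :: R)) (ht : t.credit ≤ 0) : IsLayout n P R where
  opened_pos := h.opened_pos
  fits u hu := h.fits u (List.mem_cons_of_mem t hu)
  bin_lt := h.bin_lt
  subset_unitBin := h.subset_unitBin
  disjoint := (List.pairwise_cons.1 h.disjoint).2
  opened_le := by
    have := h.opened_le
    rw [List.map_cons, List.sum_cons] at this
    linarith

lemma openBin (h : IsLayout n P R) : IsLayout (n + 1) P (Tile.full (0, 0) n 0 :: R) where
  opened_pos := n.succ_pos
  fits := by
    refine List.forall_mem_cons.2 ⟨⟨n.lt_succ_self, le_rfl, ?_, le_rfl⟩,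
      fun u hu => (h.fits u hu).mono n.le_succ⟩
    exact le_of_eq (by simp [Tile.full, classSize])
  bin_lt q hq := (h.bin_lt q hq).trans n.lt_succ_self
  subset_unitBin := h.subset_unitBin
  disjoint := by
    refine List.pairwise_cons.2 ⟨fun U hU => Set.disjoint_left.2 ?_, h.disjoint⟩
    rintro p ⟨rfl : p.1 = n, -⟩ hp
    rcases List.mem_append.1 hU with hU | hU
    · obtain ⟨u, hu, rfl⟩ := List.mem_map.1 hU
      exact (h.fits u hu).bin_lt.ne' hp.1
    · obtain ⟨q, hq, rfl⟩ := List.mem_map.1 hU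
      exact (h.bin_lt q hq).ne' hp.1
  opened_le := by
    have harea : classArea (0, 0) = 1 := by simp [classArea, classSize]
    rw [List.map_cons, List.sum_cons, Tile.credit_full, harea]
    push_cast
    linarith [h.opened_le]

lemma halve {c d : ℕ × ℕ} {b : ℕ} {v : ℝ × ℝ} (hcd : HalfOf c d)
    (h : IsLayout n P (Tile.full d b v :: R)) :
    IsLayout n P (Tile.full c b v :: Tile.full c b (v + (classSize d - classSize c)) :: R) := by
  obtain ⟨hd, hR⟩ := List.forall_mem_cons.1 h.fits
  have hsize : 0 ≤ classSize d - classSize c := sub_nonneg.2 hcd.classSize_le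
  have hhi : v + classSize c ≤ v + classSize d := by grw [hcd.classSize_le]
  have hhi' : v + (classSize d - classSize c) + classSize c = v + classSize d := by abel
  have hlo : v ≤ v + (classSize d - classSize c) := le_add_of_nonneg_right hsize
  refine ⟨h.opened_pos, ?_, h.bin_lt, h.subset_unitBin, ?_, ?_⟩
  · refine List.forall_mem_cons.2 ⟨⟨hd.bin_lt, hd.lo_nonneg, hhi.trans hd.hi_le_one, le_rfl⟩,
      List.forall_mem_cons.2 ⟨⟨hd.bin_lt, hd.lo_nonneg.trans hlo, ?_, le_rfl⟩, hR⟩⟩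
    exact hhi'.trans_le hd.hi_le_one
  · refine pairwise_disjoint_replace (m := [_, _]) h.disjoint (List.pairwise_pair.2 ?_) ?_
    · refine Set.disjoint_prod.2 (Or.inr ?_)
      simpa only [Tile.full, hhi'] using hcd.disjoint_openBox v
    · simp only [List.forall_mem_cons, List.not_mem_nil, IsEmpty.forall_iff, implies_true, and_true]
      exact ⟨Tile.region_subset_region rfl le_rfl hhi,
        Tile.region_subset_region rfl hlo hhi'.le⟩
  · have := h.opened_le
    simp only [List.map_cons, List.sum_cons, Tile.credit_full, hcd.classArea_eq] at this ⊢
    linarith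

/-- A tile with nonnegative credit is at least half as wide and half as high as its class says, so
the arms fit. -/
lemma place (h : IsLayout n P (t :: R)) (ht : 0 ≤ t.credit) {L : LShape} (hL : L.IsValid)
    (hx : L.lx ≤ (classSize t.cls).1 / 2) (hy : L.ly ≤ (classSize t.cls).2 / 2)
    (hx' : (classSize t.cls).1 ≤ 4 * L.lx) (hy' : (classSize t.cls).2 ≤ 4 * L.ly) :
    IsLayout n (P ++ [((t.bin, t.lo), L)]) (t.advance L :: R) := by
  obtain ⟨hfit, hR⟩ := List.forall_mem_cons.1 h.fits
  have hroom : t.lo + (L.lx, L.ly) ≤ t.hi := by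
    obtain ⟨hwidth, hheight⟩ := Tile.half_classSize_le_of_credit_nonneg ht
    exact ⟨by simp only [Prod.fst_add]; linarith, by simp only [Prod.snd_add]; linarith⟩
  have hitem : occupied ((t.bin, t.lo), L) ⊆ t.region :=
    (occupied_subset hL).trans (Set.prod_mono_right (openBox_subset_openBox le_rfl hroom))
  have hadvance : (t.advance L).region ⊆ t.region :=
    Tile.region_subset_region rfl (le_add_of_nonneg_right ⟨hL.1, hL.2.2.2.1⟩) le_rfl
  have hdisj : Disjoint (t.advance L).region (occupied ((t.bin, t.lo), L)) :=
    Set.disjoint_prod.2 (Or.inr (L.disjoint_interior_openBox t.lo t.hi).symm)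
  refine ⟨h.opened_pos, List.forall_mem_cons.2 ⟨hfit.advance hL, hR⟩, ?_, ?_, ?_, ?_⟩
  · exact List.forall_mem_append.2 ⟨h.bin_lt, List.forall_mem_singleton.2 hfit.bin_lt⟩
  · refine List.forall_mem_append.2 ⟨h.subset_unitBin, List.forall_mem_singleton.2 ?_⟩
    exact (hL.planeTranslate_subset_Icc _).trans
      (Set.Icc_subset_Icc hfit.lo_nonneg (hroom.trans hfit.hi_le_one))
  · have := pairwise_disjoint_replace (m := [(t.advance L).region, occupied ((t.bin, t.lo), L)])
      h.disjoint (List.pairwise_pair.2 hdisj) (by simp [hadvance, hitem])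
    refine List.Perm.pairwise ?_ this (fun hd => hd.symm)
    simp only [List.map_cons, List.map_append, List.map_nil, List.cons_append, List.nil_append,
      ← List.append_assoc]
    exact (List.perm_append_singleton _ _).symm.cons _
  · have := h.opened_le
    have := Tile.credit_le_credit_advance hL hx' hy'
    simp only [List.map_cons, List.map_append, List.sum_cons, List.sum_append, List.map_nil,
      List.sum_nil] at *
    linarith

lemma place_of_arm_eq_zero (h : IsLayout n P R) {L : LShape} (hL : L.IsValid)
    (hdeg : L.lx = 0 ∨ L.ly = 0) : IsLayout n (P ++ [((0, 0), L)]) R where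
  opened_pos := h.opened_pos
  fits := h.fits
  bin_lt := List.forall_mem_append.2 ⟨h.bin_lt, List.forall_mem_singleton.2 h.opened_pos⟩
  subset_unitBin := List.forall_mem_append.2
    ⟨h.subset_unitBin, List.forall_mem_singleton.2 hL.planeTranslate_zero_subset_unitBin⟩
  disjoint := by
    rw [List.map_append, ← List.append_assoc]
    refine List.pairwise_append.2 ⟨h.disjoint, by simp, fun U _ => ?_⟩
    simp [occupied_eq_empty (q := ((0, 0), L)) hL hdeg]
  opened_le := by
    have := h.opened_le
    have := hL.armArea_nonneg
    simp only [List.map_append, List.sum_append, List.map_cons, List.map_nil, List.sum_cons,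
      List.sum_nil]
    linarith

end IsLayout

/-! ### Spare and active tiles -/

/-- The tiles `S` are unused boxes, at most one of each class. -/
structure IsStock (S : List Tile) : Prop where
  nodup : (S.map Tile.cls).Nodup
  eq_full : ∀ t ∈ S, t = Tile.full t.cls t.bin t.lo

/-- The invariant of the algorithm: there is a layout for the placed items `P` in which every class
has at most one spare tile, an unused box, and at most one active tile, which receives the items of
that class. -/
def IsMaintained (P : List PlacedItem) : Prop :=
  ∃ n S A, IsLayout n P (S ++ A) ∧ IsStock S ∧ (A.map Tile.cls).Nodup

lemma exists_perm_cons_of_mem {α : Type*} {a : α} {l : List α} (h : a ∈ l) :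
    ∃ l', l.Perm (a :: l') := by
  obtain ⟨l₁, l₂, rfl⟩ := List.append_of_mem h
  exact ⟨l₁ ++ l₂, List.perm_middle⟩

lemma IsStock.of_perm_cons {S S' : List Tile} {t : Tile} (hS : IsStock S) (h : S.Perm (t :: S')) :
    IsStock S' where
  nodup := (List.nodup_cons.1 ((h.map Tile.cls).nodup hS.nodup)).2
  eq_full u hu := hS.eq_full u (h.mem_iff.2 (List.mem_cons_of_mem t hu))

lemma IsStock.cons_full {S : List Tile} (hS : IsStock S) {c : ℕ × ℕ} (hc : ∀ u ∈ S, u.cls ≠ c)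
    (b : ℕ) (v : ℝ × ℝ) : IsStock (Tile.full c b v :: S) where
  nodup := List.nodup_cons.2 ⟨by simpa [Tile.full] using hc, hS.nodup⟩
  eq_full := List.forall_mem_cons.2 ⟨rfl, hS.eq_full⟩

/-- The box is the spare one of class `c` if there is one, and otherwise half of a box obtained
recursively, whose other half becomes spare. The last conclusion makes the induction work: it keeps
the recursion from adding a second spare box of class `c`. -/
lemma exists_full_cons {P : List PlacedItem} {A : List Tile} (c : ℕ × ℕ) {n : ℕ} {S : List Tile}
    (h : IsLayout n P (S ++ A)) (hS : IsStock S) :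
    ∃ m b v S', IsLayout m P (Tile.full c b v :: (S' ++ A)) ∧ IsStock S' ∧
      ∀ u ∈ S', u ∈ S ∨ u.cls.1 + u.cls.2 ≤ c.1 + c.2 := by
  induction hlevel : c.1 + c.2 using Nat.strong_induction_on generalizing c with
  | _ level ih =>
  subst hlevel
  by_cases hspare : ∃ t ∈ S, t.cls = c
  · obtain ⟨t, ht, rfl⟩ := hspare
    obtain ⟨S', hperm⟩ := exists_perm_cons_of_mem ht
    refine ⟨n, t.bin, t.lo, S', ?_, hS.of_perm_cons hperm, fun u hu => Or.inl ?_⟩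
    · rw [← hS.eq_full t ht]
      exact h.perm (hperm.append_right A)
    · exact hperm.mem_iff.2 (List.mem_cons_of_mem t hu)
  · push Not at hspare
    by_cases hc : c = (0, 0)
    · subst hc
      exact ⟨n + 1, n, 0, S, h.openBin, hS, fun u hu => Or.inl hu⟩
    · obtain ⟨d, hcd⟩ := exists_halfOf hc
      obtain ⟨m, b, v, S', hlayout, hS', hnew⟩ := ih _ hcd.level_lt d rfl
      have hlevel := hcd.level_lt
      have hnone : ∀ u ∈ S', u.cls ≠ c := by
        rintro u hu rfl
        rcases hnew u hu with hu | hu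
        · exact hspare u hu rfl
        · omega
      refine ⟨m, b, v, _ :: S', hlayout.halve hcd, hS'.cons_full hnone _ _, ?_⟩
      exact List.forall_mem_cons.2
        ⟨Or.inr le_rfl, fun u hu => (hnew u hu).imp_right fun hu => by omega⟩

lemma exists_active_cons {P : List PlacedItem} (hP : IsMaintained P) (c : ℕ × ℕ) :
    ∃ n t S A, IsLayout n P (t :: (S ++ A)) ∧ IsStock S ∧ ((t :: A).map Tile.cls).Nodup ∧
      t.cls = c ∧ 0 ≤ t.credit := by
  obtain ⟨n, S, A, h, hS, hA⟩ := hP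
  have exists_fresh : ∀ A, IsLayout n P (S ++ A) → (A.map Tile.cls).Nodup →
      (∀ u ∈ A, u.cls ≠ c) → ∃ n t S A, IsLayout n P (t :: (S ++ A)) ∧ IsStock S ∧
        ((t :: A).map Tile.cls).Nodup ∧ t.cls = c ∧ 0 ≤ t.credit := by
    intro A h hA hc
    obtain ⟨m, b, v, S', h, hS', -⟩ := exists_full_cons c h hS
    exact ⟨m, _, S', A, h, hS', List.nodup_cons.2 ⟨by simpa [Tile.full] using hc, hA⟩, rfl,
      (classArea_nonneg c).trans_eq (Tile.credit_full c b v).symm⟩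
  by_cases hactive : ∃ t ∈ A, t.cls = c
  · obtain ⟨t, ht, rfl⟩ := hactive
    obtain ⟨A', hperm⟩ := exists_perm_cons_of_mem ht
    replace h := h.perm ((hperm.append_left S).trans List.perm_middle)
    replace hA := (hperm.map Tile.cls).nodup hA
    rcases le_or_gt 0 t.credit with hcredit | hcredit
    · exact ⟨n, t, S, A', h, hS, hA, rfl, hcredit⟩
    · obtain ⟨hne, hA'⟩ := List.nodup_cons.1 hA
      exact exists_fresh A' (h.discard hcredit.le) hA' (by simpa using hne)
  · push Not at hactive
    exact exists_fresh A h hA hactive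

namespace IsMaintained

lemma nil : IsMaintained [] := by
  refine ⟨1, [Tile.full (0, 0) 0 0], [], ⟨one_pos, ?_, by simp, by simp, by simp, ?_⟩,
    ⟨by simp, by simp [Tile.full]⟩, by simp⟩
  · refine List.forall_mem_singleton.2 ⟨one_pos, le_rfl, le_of_eq ?_, le_rfl⟩
    simp [Tile.full, classSize]
  · simp [Tile.credit_full, classArea, classSize]

lemma exists_concat {P : List PlacedItem} (hP : IsMaintained P) {L : LShape} (hL : L.IsValid)
    (hx : L.lx ≤ 1 / 2) (hy : L.ly ≤ 1 / 2) : ∃ p, IsMaintained (P ++ [(p, L)]) := by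
  by_cases hdeg : L.lx = 0 ∨ L.ly = 0
  · obtain ⟨n, S, A, h, hS, hA⟩ := hP
    exact ⟨(0, 0), n, S, A, h.place_of_arm_eq_zero hL hdeg, hS, hA⟩
  rw [not_or] at hdeg
  have hlx : 0 < L.lx := (hL.1.trans hL.2.1).lt_of_ne' hdeg.1
  have hly : 0 < L.ly := (hL.2.2.2.1.trans hL.2.2.2.2.1).lt_of_ne' hdeg.2
  obtain ⟨i, hi, hi'⟩ := exists_one_half_pow_near hlx hx
  obtain ⟨j, hj, hj'⟩ := exists_one_half_pow_near hly hy
  obtain ⟨n, t, S, A, h, hS, hA, hcls, hcredit⟩ := exists_active_cons hP (i, j)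
  have hplaced := h.place hcredit hL (by rwa [hcls]) (by rwa [hcls]) (by rwa [hcls]) (by rwa [hcls])
  exact ⟨(t.bin, t.lo), n, S, t.advance L :: A, hplaced.perm List.perm_middle.symm, hS, hA⟩

end IsMaintained

lemma IsLayout.opened_lt {n : ℕ} {P : List PlacedItem} {S A : List Tile}
    (h : IsLayout n P (S ++ A)) (hS : (S.map Tile.cls).Nodup) (hA : (A.map Tile.cls).Nodup) :
    (n : ℝ) < 8 * (P.map fun q => q.2.armArea).sum + 8 := by
  obtain ⟨hfitS, hfitA⟩ := List.forall_mem_append.1 h.fits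
  have hspare := Tile.sum_credit_lt_four hfitS hS
  have hactive := Tile.sum_credit_lt_four hfitA hA
  have hopened := h.opened_le
  rw [List.map_append, List.sum_append] at hopened
  linarith

/-! ### From layouts to online packings -/

section

variable {n : ℕ} {B : List LShape → BinPoint} {l : List LShape} {R : List Tile}

lemma mem_onlineTrace (i : Fin l.length) : (placeOf B l i, l.get i) ∈ onlineTrace B l :=
  (List.mem_ofFn' _ _).2 ⟨i, rfl⟩

lemma IsLayout.onlinePacks (h : IsLayout n (onlineTrace B l) R) : OnlinePacks B l := by
  have hlt (i j : Fin l.length) (hij : i < j) :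
      Disjoint (occupied (placeOf B l i, l.get i)) (occupied (placeOf B l j, l.get j)) :=
    List.pairwise_ofFn.1 (List.pairwise_map.1 (List.pairwise_append.1 h.disjoint).2.1) hij
  refine ⟨fun i => h.subset_unitBin _ (mem_onlineTrace i), fun i j hij hbin => ?_⟩
  have hdisj : Disjoint (occupied (placeOf B l i, l.get i)) (occupied (placeOf B l j, l.get j)) :=
    hij.lt_or_gt.elim (hlt i j) fun hji => (hlt j i hji).symm
  refine (Set.disjoint_prod.1 hdisj).resolve_left ?_
  simp [hbin]

lemma IsLayout.binsUsed_le (h : IsLayout n (onlineTrace B l) R) : binsUsed B l ≤ n := by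
  refine (Finset.card_le_card (t := Finset.range n) ?_).trans_eq (Finset.card_range n)
  refine Finset.image_subset_iff.2 fun i _ => Finset.mem_range.2 ?_
  exact h.bin_lt _ (mem_onlineTrace i)

end

lemma IsMaintained.binsUsed_le {B : List LShape → BinPoint} {l : List LShape}
    (h : IsMaintained (onlineTrace B l)) (hl : ∀ L ∈ l, L.IsValid) :
    binsUsed B l ≤ 8 * OPT l + 7 := by
  obtain ⟨n, S, A, h, hS, hA⟩ := h
  have harea : ((onlineTrace B l).map fun q => q.2.armArea) = l.map LShape.armArea := by
    rw [← map_snd_onlineTrace B l, List.map_map, map_snd_onlineTrace]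
    rfl
  have hopened : (n : ℝ) < 8 * (l.map LShape.armArea).sum + 8 := harea ▸ h.opened_lt hS.nodup hA
  have hn : (n : ℝ) < (8 * OPT l + 8 : ℕ) := by
    push_cast
    linarith [sum_armArea_le_OPT hl]
  exact h.binsUsed_le.trans (Nat.le_of_lt_succ (by exact_mod_cast hn))

/-- there is a deterministic online bin-packing algorithm that, on every input
sequence of small L-shapes (`ℓx ≤ 1/2` and `ℓy ≤ 1/2`), produces a valid packing using at
most `8·OPT + 7` bins. -/
theorem stmt7 :
    ∃ A : List LShape → ℕ × ℝ × ℝ,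
      ∀ l : List LShape,
        (∀ L ∈ l, L.IsValid ∧ L.lx ≤ 1 / 2 ∧ L.ly ≤ 1 / 2) →
        OnlinePacks A l ∧ binsUsed A l ≤ 8 * OPT l + 7 := by
  have hstep : ∀ P L, IsMaintained P → (L.IsValid ∧ L.lx ≤ 1 / 2 ∧ L.ly ≤ 1 / 2) →
      ∃ p, IsMaintained (P ++ [(p, L)]) :=
    fun _ _ hP hL => hP.exists_concat hL.1 hL.2.1 hL.2.2
  obtain ⟨A, hA⟩ := exists_onlineTrace_of_step IsMaintained.nil hstep
  refine ⟨A, fun l hl => ⟨?_, (hA l hl).binsUsed_le fun L hL => (hl L hL).1⟩⟩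
  obtain ⟨n, S, T, hlayout, -⟩ := hA l hl
  exact hlayout.onlinePacks
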